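/- arXiv:2206.07017 — 2 statements merged into one kernel-verified Lean document; each statement's English description precedes it below -/
import Mathlib

section
/- Let α be a countable ordinal, δ = ω^(α+1), X = [1, δ] with the order topology, and G the group of homeomorphisms of X. Then: (i) for every g ∈ G and every integer m ≥ 1 there is a unique integer n ≥ 1 with g(ω^α·m) = ω^α·n; (ii) the resulting map π(g), sending m to this n, is a permutation of {1,2,…}; (iii) π : G → Sym({1,2,…}) is a group homomorphism; and (iv) the kernel of π equals the pointwise stabilizer in G of the set {ω^α·n : 1 ≤ n ≤ ω} (which includes δ = ω^α·ω). -/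
open Ordinal Topology

noncomputable section

/-- The ordinal interval `[1, γ]`, i.e. the set of ordinals `β` with `1 ≤ β ≤ γ`, with the
subspace topology induced from the order topology on `Ordinal` (equivalently, its order
topology, since it is order-connected). -/
abbrev OrdIcc (γ : Ordinal) : Type _ := ↥(Set.Icc (1 : Ordinal) γ)

/-- `X = [1, δ]` where `δ = ω^(α+1)`. -/
abbrev Xsp (α : Ordinal) : Type _ := OrdIcc (omega0 ^ (α + 1))

lemma omega_pow_mul_mem (α : Ordinal) (m : ℕ+) :
    omega0 ^ α * ((m : ℕ) : Ordinal) ∈ Set.Icc (1 : Ordinal) (omega0 ^ (α + 1)) := by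
  constructor
  · have h1 : (1 : Ordinal) ≤ omega0 ^ α := Order.one_le_iff_pos.2 (opow_pos _ omega0_pos)
    have h2 : (1 : Ordinal) ≤ ((m : ℕ) : Ordinal) := by exact_mod_cast m.one_le
    calc (1 : Ordinal) = 1 * 1 := (one_mul 1).symm
      _ ≤ omega0 ^ α * ((m : ℕ) : Ordinal) := mul_le_mul' h1 h2
  · rw [Ordinal.add_one_eq_succ, Ordinal.opow_succ]
    exact mul_le_mul' le_rfl (Ordinal.nat_lt_omega0 m).le

/-- The point `ω^α·m` of `X` (for `m ≥ 1`). -/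
def pt (α : Ordinal) (m : ℕ+) : Xsp α :=
  ⟨omega0 ^ α * ((m : ℕ) : Ordinal), omega_pow_mul_mem α m⟩

/-- `A_n = [ω^α·(n−1)+1, ω^α·n]`, as a subset of `X`. -/
def Ablock (α : Ordinal) (n : ℕ+) : Set (Xsp α) :=
  {x : Xsp α | (x : Ordinal) ∈
    Set.Icc (omega0 ^ α * (((n : ℕ) - 1 : ℕ) : Ordinal) + 1) (omega0 ^ α * ((n : ℕ) : Ordinal))}

/-- The defining property of the homomorphism `π : G → Sym({1,2,…})`:
`π(g)(m) = n` iff `g(ω^α·m) = ω^α·n`. -/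
def IsBlockPerm (α : Ordinal) (π : (Xsp α ≃ₜ Xsp α) → Equiv.Perm ℕ+) : Prop :=
  ∀ (g : Xsp α ≃ₜ Xsp α) (m : ℕ+), g (pt α m) = pt α (π g m)

/-!
Homeomorphisms preserve every Cantor–Bendixson derivative. The `β`-th derivative of `[1, γ]`
consists of the multiples of `ω^β`, because the multiples of `b ≠ 0` accumulate exactly at the
nonzero multiples of `b * ω`. In `X = [1, ω^(α+1)]` the only multiple of `ω^(α+1)` is `δ`, and the
remaining multiples of `ω^α` are the points `ω^α·m` with `m ≥ 1`. So every homeomorphism fixes `δ`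
and permutes these points.
-/

open CantorBendixson Set

universe u

theorem bijective_of_apply_eq_of_mem_range_iff {ι X : Type*} {p : ι → X} (hp : Function.Injective p)
    (g : X ≃ X) (hg : ∀ x, g x ∈ range p ↔ x ∈ range p) {σ : ι → ι}
    (hσ : ∀ i, g (p i) = p (σ i)) : Function.Bijective σ := by
  refine ⟨fun i j hij => hp (g.injective ?_), fun j => ?_⟩
  · rw [hσ, hσ, hij]
  · obtain ⟨i, hi⟩ : g.symm (p j) ∈ range p := by
      rw [← hg, g.apply_symm_apply]
      exact mem_range_self j
    exact ⟨i, hp (by rw [← hσ, hi, g.apply_symm_apply])⟩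

section IteratedDerivedSet

variable {X Y : Type u} [TopologicalSpace X] [TopologicalSpace Y]

theorem mapsTo_iteratedDerivedSet {f : X → Y} (hf : Continuous f) (hinj : Function.Injective f)
    {s : Set X} {t : Set Y} (hst : MapsTo f s t) (a : Ordinal) : MapsTo f sᵈ[a] tᵈ[a] := by
  induction a using Ordinal.limitRecOn with
  | zero => simpa using hst
  | add_one a ih =>
    rw [iteratedDerivedSet_succ, iteratedDerivedSet_succ]
    rintro x ⟨hacc, hx⟩
    have himage : f x ∈ derivedSet (f '' sᵈ[a]) :=
      hf.image_derivedSet hinj (mem_image_of_mem f hacc)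
    exact ⟨derivedSet_mono _ _ ih.image_subset himage, ih hx⟩
  | limit a ha ih =>
    rw [iteratedDerivedSet_limit ha, iteratedDerivedSet_limit ha]
    intro x hx
    rw [mem_iInter] at hx ⊢
    exact fun b => ih b b.2 (hx b)

theorem homeomorph_apply_mem_iteratedDerivedSet_univ_iff (g : X ≃ₜ Y) (a : Ordinal) {x : X} :
    g x ∈ (univ : Set Y)ᵈ[a] ↔ x ∈ (univ : Set X)ᵈ[a] := by
  refine ⟨fun h => ?_, fun h =>
    mapsTo_iteratedDerivedSet g.continuous g.injective (mapsTo_univ _ _) a h⟩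
  simpa using mapsTo_iteratedDerivedSet g.symm.continuous g.symm.injective (mapsTo_univ _ _) a h

end IteratedDerivedSet

theorem mul_omega0_dvd_iff_forall_lt {b x : Ordinal} (hb : b ≠ 0) (hx : x ≠ 0) :
    b * ω ∣ x ↔ ∀ a < x, ({y | b ∣ y} ∩ Ioo a x).Nonempty := by
  have hb_pos : 0 < b := pos_iff_ne_zero.2 hb
  constructor
  · rintro ⟨c, rfl⟩ a ha
    rw [mul_assoc] at ha hx ⊢
    have hlim : Order.IsSuccLimit (ω * c) :=
      Ordinal.isSuccLimit_iff.2
        ⟨right_ne_zero_of_mul hx, isSuccPrelimit_iff_omega0_dvd.2 (dvd_mul_right _ _)⟩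
    obtain ⟨d, hd, had⟩ := (lt_mul_iff_of_isSuccLimit hlim).1 ha
    exact ⟨b * d, dvd_mul_right _ _, had, mul_lt_mul_of_pos_left hd hb_pos⟩
  · intro hacc
    obtain ⟨q, rfl⟩ : b ∣ x := by
      refine ⟨x / b, (mul_div_le x b).antisymm' (not_lt.1 fun hlt => ?_)⟩
      obtain ⟨_, ⟨c, rfl⟩, hlower, hupper⟩ := hacc _ hlt
      exact (lt_of_mul_lt_mul_left' hlower).not_ge ((mul_le_iff_le_div hb).1 hupper.le)
    refine mul_dvd_mul_left b (isSuccPrelimit_iff_omega0_dvd.1 fun p hp => ?_)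
    obtain ⟨_, ⟨c, rfl⟩, hlower, hupper⟩ := hacc _ (mul_lt_mul_of_pos_left hp.lt hb_pos)
    exact hp.2 (lt_of_mul_lt_mul_left' hlower) (lt_of_mul_lt_mul_left' hupper)

theorem opow_dvd_iff_of_isSuccLimit {b β x : Ordinal} (hb : b ≠ 0) (hβ : Order.IsSuccLimit β) :
    b ^ β ∣ x ↔ ∀ γ < β, b ^ γ ∣ x := by
  refine ⟨fun h γ hγ => (opow_dvd_opow b hγ.le).trans h, fun h => ?_⟩
  rw [dvd_iff_mod_eq_zero]
  by_contra hrem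
  have hrem_lt : x % b ^ β < b ^ β := mod_lt _ (opow_pos _ (pos_iff_ne_zero.2 hb)).ne'
  obtain ⟨γ, hγ, hrem_lt_γ⟩ := (lt_opow_of_isSuccLimit hb hβ).1 hrem_lt
  have hdvd_rem : b ^ γ ∣ x % b ^ β := by
    rw [← dvd_add_iff ((opow_dvd_opow b hγ.le).mul_right (x / b ^ β)), div_add_mod]
    exact h γ hγ
  exact (le_of_dvd hrem hdvd_rem).not_gt hrem_lt_γ

namespace OrdIcc

variable {γ γ' : Ordinal.{u}}

theorem coe_ne_zero (x : OrdIcc γ) : (x : Ordinal) ≠ 0 :=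
  Order.one_le_iff_ne_zero.1 x.2.1

theorem dvd_coe_iff_coe_eq (x : OrdIcc γ) : γ ∣ (x : Ordinal) ↔ (x : Ordinal) = γ :=
  ⟨fun h => x.2.2.antisymm (le_of_dvd x.coe_ne_zero h), fun h => h.symm.dvd⟩

theorem isOpenEmbedding_coe : IsOpenEmbedding ((↑) : OrdIcc γ → Ordinal) := by
  have hIcc : Icc 1 γ = Ioo 0 (Order.succ γ) := by
    ext
    simp [Order.one_le_iff_pos]
  exact (hIcc ▸ isOpen_Ioo : IsOpen (Icc 1 γ)).isOpenEmbedding_subtypeVal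

theorem accPt_preimage_coe_iff {S : Set Ordinal} {x : OrdIcc γ} :
    AccPt x (Filter.principal ((↑) ⁻¹' S)) ↔ ∀ a < (x : Ordinal), (S ∩ Ioo a x).Nonempty := by
  rw [← Filter.comap_principal, isOpenEmbedding_coe.accPt_comap_iff,
    SuccOrder.accPt_principal]
  simp [x.coe_ne_zero]

theorem relDerivedSet_setOf_dvd {b : Ordinal} (hb : b ≠ 0) :
    relDerivedSet {x : OrdIcc γ | b ∣ (x : Ordinal)} = {x : OrdIcc γ | b * ω ∣ (x : Ordinal)} := by
  ext x
  have hacc : x ∈ derivedSet {x : OrdIcc γ | b ∣ (x : Ordinal)} ↔ b * ω ∣ (x : Ordinal) :=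
    accPt_preimage_coe_iff.trans (mul_omega0_dvd_iff_forall_lt hb x.coe_ne_zero).symm
  rw [relDerivedSet_apply, mem_inter_iff, hacc]
  exact and_iff_left_of_imp (dvd_of_mul_right_dvd ·)

/- The points of `OrdIcc γ` live one universe above `γ`, and Mathlib indexes derivatives by ordinals
of the universe of the space; hence the lift. -/
theorem iteratedDerivedSet_univ (γ β : Ordinal.{u}) :
    (univ : Set (OrdIcc γ))ᵈ[lift.{u + 1} β] =
      {x : OrdIcc γ | ω ^ β ∣ (x : Ordinal)} := by
  induction β using Ordinal.limitRecOn with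
  | zero => simp
  | add_one β ih =>
    rw [lift_add, lift_one, iteratedDerivedSet_succ, ih,
      relDerivedSet_setOf_dvd (opow_pos _ omega0_pos).ne', opow_add_one]
  | limit β hβ ih =>
    ext x
    rw [iteratedDerivedSet_limit (isSuccLimit_lift.2 hβ), mem_iInter, mem_ofPred,
      opow_dvd_iff_of_isSuccLimit omega0_ne_zero hβ]
    constructor
    · intro h ξ hξ
      have hmem := h ⟨lift.{u + 1} ξ, lift_lt.2 hξ⟩
      rwa [ih ξ hξ] at hmem
    · rintro h ⟨_, hlt⟩
      obtain ⟨ξ, hξ, rfl⟩ := lt_lift_iff.1 hlt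
      rw [ih ξ hξ]
      exact h ξ hξ

theorem omega0_opow_dvd_homeomorph_apply_iff (g : OrdIcc γ ≃ₜ OrdIcc γ') (β : Ordinal)
    (x : OrdIcc γ) : ω ^ β ∣ (g x : Ordinal) ↔ ω ^ β ∣ (x : Ordinal) := by
  have h := homeomorph_apply_mem_iteratedDerivedSet_univ_iff g (lift.{u + 1} β) (x := x)
  rwa [iteratedDerivedSet_univ, iteratedDerivedSet_univ] at h

theorem homeomorph_apply_eq_self_of_dvd {β : Ordinal} (g : OrdIcc (ω ^ β) ≃ₜ OrdIcc (ω ^ β))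
    {x : OrdIcc (ω ^ β)} (hx : ω ^ β ∣ (x : Ordinal)) : g x = x :=
  have hgx := (omega0_opow_dvd_homeomorph_apply_iff g β x).2 hx
  Subtype.ext <| ((g x).dvd_coe_iff_coe_eq.1 hgx).trans (x.dvd_coe_iff_coe_eq.1 hx).symm

end OrdIcc

theorem pt_injective (α : Ordinal) : Function.Injective (pt α) := fun _ _ h =>
  PNat.coe_injective <| Nat.cast_injective <|
    mul_left_cancel₀ (opow_pos α omega0_pos).ne' (congrArg Subtype.val h)

theorem Xsp.exists_eq_mul_iff_dvd {α : Ordinal} (x : Xsp α) :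
    (∃ n : Ordinal, 1 ≤ n ∧ n ≤ ω ∧ (x : Ordinal) = ω ^ α * n) ↔ ω ^ α ∣ (x : Ordinal) := by
  refine ⟨fun ⟨n, _, _, hx⟩ => ⟨n, hx⟩, fun ⟨n, hx⟩ => ⟨n, ?_, ?_, hx⟩⟩
  · exact Order.one_le_iff_ne_zero.2 (right_ne_zero_of_mul (hx ▸ x.coe_ne_zero))
  · have hle : ω ^ α * n ≤ ω ^ α * ω := by
      rw [← hx, ← opow_add_one]
      exact x.2.2
    exact le_of_mul_le_mul_left hle (opow_pos α omega0_pos)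

theorem mem_range_pt_iff {α : Ordinal} {x : Xsp α} :
    x ∈ range (pt α) ↔ ω ^ α ∣ (x : Ordinal) ∧ ¬ ω ^ (α + 1) ∣ (x : Ordinal) := by
  have hpos : 0 < ω ^ α := opow_pos α omega0_pos
  rw [x.dvd_coe_iff_coe_eq]
  constructor
  · rintro ⟨m, rfl⟩
    have hlt : ω ^ α * ((m : ℕ) : Ordinal) < ω ^ (α + 1) := by
      rw [opow_add_one]
      exact mul_lt_mul_of_pos_left (natCast_lt_omega0 m) hpos
    exact ⟨dvd_mul_right _ _, hlt.ne⟩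
  · rintro ⟨hdvd, hne⟩
    obtain ⟨n, hn_pos, hn_le, hx⟩ := x.exists_eq_mul_iff_dvd.2 hdvd
    have hn_lt : n < ω := hn_le.lt_of_ne fun h => hne (by rw [hx, h, opow_add_one])
    obtain ⟨k, rfl⟩ := lt_omega0.1 hn_lt
    exact ⟨⟨k, by exact_mod_cast hn_pos⟩, Subtype.ext hx.symm⟩

theorem homeomorph_apply_mem_range_pt_iff {α : Ordinal} (g : Xsp α ≃ₜ Xsp α) (x : Xsp α) :
    g x ∈ range (pt α) ↔ x ∈ range (pt α) := by
  simp only [mem_range_pt_iff, OrdIcc.omega0_opow_dvd_homeomorph_apply_iff]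

theorem forall_apply_pt_eq_iff {α : Ordinal} (g : Xsp α ≃ₜ Xsp α) :
    (∀ m, g (pt α m) = pt α m) ↔ ∀ x : Xsp α, ω ^ α ∣ (x : Ordinal) → g x = x := by
  refine ⟨fun h x hx => ?_, fun h m => h _ (dvd_mul_right _ _)⟩
  by_cases htop : ω ^ (α + 1) ∣ (x : Ordinal)
  · exact OrdIcc.homeomorph_apply_eq_self_of_dvd g htop
  · obtain ⟨m, rfl⟩ := mem_range_pt_iff.2 ⟨hx, htop⟩
    exact h m

theorem pi_well_defined_hom_ker_general (α : Ordinal) :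
    (∀ (g : Xsp α ≃ₜ Xsp α) (m : ℕ+), ∃! n : ℕ+, g (pt α m) = pt α n) ∧
    ∀ π : (Xsp α ≃ₜ Xsp α) → ℕ+ → ℕ+,
      (∀ (g : Xsp α ≃ₜ Xsp α) (m : ℕ+), g (pt α m) = pt α (π g m)) →
      (∀ g : Xsp α ≃ₜ Xsp α, Function.Bijective (π g)) ∧
      (∀ g h : Xsp α ≃ₜ Xsp α, π (g.trans h) = π h ∘ π g) ∧
      (∀ g : Xsp α ≃ₜ Xsp α,
        (∀ m : ℕ+, π g m = m) ↔
        (∀ x : Xsp α,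
          (∃ n : Ordinal, 1 ≤ n ∧ n ≤ omega0 ∧ (x : Ordinal) = omega0 ^ α * n) → g x = x)) := by
  refine ⟨fun g m => ?_, fun π hπ => ⟨fun g => ?_, fun g h => funext fun m => ?_, fun g => ?_⟩⟩
  · obtain ⟨n, hn⟩ := (homeomorph_apply_mem_range_pt_iff g _).2 (mem_range_self m)
    exact ⟨n, hn.symm, fun k hk => pt_injective α (hk.symm.trans hn.symm)⟩
  · exact bijective_of_apply_eq_of_mem_range_iff (pt_injective α) g.toEquiv
      (homeomorph_apply_mem_range_pt_iff g) (hπ g)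
  · apply pt_injective α
    rw [← hπ, Homeomorph.trans_apply, hπ, hπ, Function.comp_apply]
  · simp only [Xsp.exists_eq_mul_iff_dvd, ← forall_apply_pt_eq_iff, hπ, (pt_injective α).eq_iff]

/-- (i) For every `g ∈ G` and `m ≥ 1` there is a unique `n ≥ 1` with
`g(ω^α·m) = ω^α·n`; (ii) for any map `π` satisfying the resulting defining property, each
`π(g)` is a permutation of `{1,2,…}`; (iii) `π` is a group homomorphism (it turns composition
`hg : x ↦ h(g(x))`, i.e. `g.trans h`, into composition of permutations); and (iv) the kernel
of `π` is the pointwise stabilizer of `{ω^α·n : 1 ≤ n ≤ ω}` (which includes `δ = ω^α·ω`). -/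
theorem pi_well_defined_hom_ker (α : Ordinal) (hα : α.card ≤ Cardinal.aleph0) :
    (∀ (g : Xsp α ≃ₜ Xsp α) (m : ℕ+), ∃! n : ℕ+, g (pt α m) = pt α n) ∧
    ∀ π : (Xsp α ≃ₜ Xsp α) → ℕ+ → ℕ+,
      (∀ (g : Xsp α ≃ₜ Xsp α) (m : ℕ+), g (pt α m) = pt α (π g m)) →
      (∀ g : Xsp α ≃ₜ Xsp α, Function.Bijective (π g)) ∧
      (∀ g h : Xsp α ≃ₜ Xsp α, π (g.trans h) = π h ∘ π g) ∧
      (∀ g : Xsp α ≃ₜ Xsp α,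
        (∀ m : ℕ+, π g m = m) ↔
        (∀ x : Xsp α,
          (∃ n : Ordinal, 1 ≤ n ∧ n ≤ omega0 ∧ (x : Ordinal) = omega0 ^ α * n) → g x = x)) :=
  pi_well_defined_hom_ker_general α
end
end

section
/- Let α be a countable ordinal, δ = ω^(α+1), X = [1, δ] with the order topology, G the group of homeomorphisms of X, A_n = [ω^α·(n−1)+1, ω^α·n] for n ≥ 1, and π : G → Sym({1,2,…}) the homomorphism determined by π(g)(m) = n iff g(ω^α·m) = ω^α·n. Then for every g ∈ G and every i ≥ 1, the sets P_i(g) = A_{π(g)(i)} \ g(A_i) and Q_i(g) = A_i \ g⁻¹(A_{π(g)(i)}) are clopen in X, P_i(g) is a bounded subset of A_{π(g)(i)}, and Q_i(g) is a bounded subset of A_i. -/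
open Ordinal Topology

noncomputable section

/-- `P_i(g) = A_{π(g)(i)} \ g(A_i)`. -/
def Pset (α : Ordinal) (π : (Xsp α ≃ₜ Xsp α) → Equiv.Perm ℕ+)
    (g : Xsp α ≃ₜ Xsp α) (i : ℕ+) : Set (Xsp α) :=
  Ablock α (π g i) \ (⇑g '' Ablock α i)

/-- `Q_i(g) = A_i \ g⁻¹(A_{π(g)(i)})`. -/
def Qset (α : Ordinal) (π : (Xsp α ≃ₜ Xsp α) → Equiv.Perm ℕ+)
    (g : Xsp α ≃ₜ Xsp α) (i : ℕ+) : Set (Xsp α) :=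
  Ablock α i \ (⇑g ⁻¹' Ablock α (π g i))

/-- `(P₁, Q₁) ∼ (P₂, Q₂)` iff the topological disjoint union `P₁ ⊔ Q₂` is homeomorphic
to `P₂ ⊔ Q₁`. -/
def PairSim (P₁ Q₁ P₂ Q₂ : Type*) [TopologicalSpace P₁] [TopologicalSpace Q₁]
    [TopologicalSpace P₂] [TopologicalSpace Q₂] : Prop :=
  Nonempty ((P₁ ⊕ Q₂) ≃ₜ (P₂ ⊕ Q₁))

/-- A subset `S` of `A_i` is bounded if it is contained in `[ω^α·(i−1)+1, x]`
for some `x < ω^α·i`. -/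
def BoundedIn (α : Ordinal) (i : ℕ+) (S : Set (Xsp α)) : Prop :=
  ∃ x : Ordinal, x < omega0 ^ α * ((i : ℕ) : Ordinal) ∧
    ∀ y ∈ S, (y : Ordinal) ∈ Set.Icc (omega0 ^ α * (((i : ℕ) - 1 : ℕ) : Ordinal) + 1) x

/-!
The top point `ω^α·i` of `A_i` is mapped by `g` to the top point `ω^α·π(g)(i)` of `A_{π(g)(i)}`.
Hence `g(A_i)` and `g⁻¹(A_{π(g)(i)})` are clopen neighbourhoods of the top points of the blocks
from which they are removed, and in the order topology a closed subset of a block that misses its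
top point stays below some smaller ordinal.
-/

section

variable {L : Type*} [LinearOrder L] [TopologicalSpace L]

lemma isOpen_Icc_add_one [OrderClosedTopology L] [Add L] [One L] [SuccAddOrder L] [NoMaxOrder L]
    (a b : L) : IsOpen (Set.Icc (a + 1) b) := by
  rw [Set.Icc_add_one_left_eq_Ioc, ← Set.Ioo_add_one_right_eq_Ioc]
  exact isOpen_Ioo

lemma exists_lt_forall_le_of_isClosed_of_notMem [OrderTopology L] {S : Set L} {a : L}
    (hS : IsClosed S) (haS : a ∉ S) (ha : ∃ l, l < a) : ∃ x < a, ∀ y ∈ S, y ≤ a → y ≤ x := by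
  obtain ⟨x, hxa, hx⟩ := exists_Ioc_subset_of_mem_nhds (hS.isOpen_compl.mem_nhds haS) ha
  exact ⟨x, hxa, fun y hyS hya => not_lt.1 fun hxy => hx ⟨hxy, hya⟩ hyS⟩

end

lemma isClopen_image_homeomorph_iff {Y Z : Type*} [TopologicalSpace Y] [TopologicalSpace Z]
    (e : Y ≃ₜ Z) {S : Set Y} : IsClopen (e '' S) ↔ IsClopen S :=
  and_congr e.isClosed_image e.isOpen_image

lemma isClopen_Ablock (α : Ordinal) (n : ℕ+) : IsClopen (Ablock α n) :=
  IsClopen.preimage ⟨isClosed_Icc, isOpen_Icc_add_one _ _⟩ continuous_subtype_val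

lemma pt_mem_Ablock (α : Ordinal) (n : ℕ+) : pt α n ∈ Ablock α n := by
  have hn : (((n : ℕ) - 1 : ℕ) : Ordinal) < ((n : ℕ) : Ordinal) :=
    Nat.cast_lt.2 (Nat.sub_lt n.pos one_pos)
  have hlt := mul_lt_mul_of_pos_left hn (opow_pos α omega0_pos)
  exact ⟨Order.add_one_le_of_lt hlt, le_rfl⟩

lemma boundedIn_of_isClosed {α : Ordinal} {n : ℕ+} {S : Set (Xsp α)} (hS : IsClosed S)
    (hSA : S ⊆ Ablock α n) (hn : pt α n ∉ S) : BoundedIn α n S := by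
  -- The bound is sought in `Ordinal`, as `X` has no point below `ω^α·n` when `α = 0` and `n = 1`.
  have hS' : IsClosed (Subtype.val '' S) := isClosed_Icc.isClosedMap_subtype_val S hS
  have hn' : (pt α n : Ordinal) ∉ Subtype.val '' S := by
    rwa [Subtype.val_injective.mem_set_image]
  have hpos : (0 : Ordinal) < pt α n := zero_lt_one.trans_le (pt α n).2.1
  obtain ⟨x, hxn, hx⟩ := exists_lt_forall_le_of_isClosed_of_notMem hS' hn' ⟨0, hpos⟩
  exact ⟨x, hxn, fun y hy => ⟨(hSA hy).1, hx y (Set.mem_image_of_mem _ hy) (hSA hy).2⟩⟩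

lemma boundedIn_Ablock_diff {α : Ordinal} {n : ℕ+} {U : Set (Xsp α)} (hU : IsOpen U)
    (hn : pt α n ∈ U) : BoundedIn α n (Ablock α n \ U) :=
  boundedIn_of_isClosed ((isClopen_Ablock α n).isClosed.sdiff hU) Set.sdiff_subset
    fun h => h.2 hn

theorem Pset_Qset_clopen_bounded_general (α : Ordinal)
    (π : (Xsp α ≃ₜ Xsp α) → Equiv.Perm ℕ+) (hπ : IsBlockPerm α π)
    (g : Xsp α ≃ₜ Xsp α) (i : ℕ+) :
    IsClopen (Pset α π g i) ∧ IsClopen (Qset α π g i) ∧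
    BoundedIn α (π g i) (Pset α π g i) ∧ BoundedIn α i (Qset α π g i) := by
  have image_clopen : IsClopen (g '' Ablock α i) :=
    (isClopen_image_homeomorph_iff g).2 (isClopen_Ablock α i)
  have preimage_clopen : IsClopen (g ⁻¹' Ablock α (π g i)) :=
    (isClopen_Ablock α (π g i)).preimage g.continuous
  have pt_mem_image : pt α (π g i) ∈ g '' Ablock α i := ⟨pt α i, pt_mem_Ablock α i, hπ g i⟩
  have pt_mem_preimage : pt α i ∈ g ⁻¹' Ablock α (π g i) := by
    rw [Set.mem_preimage, hπ g i]
    exact pt_mem_Ablock α (π g i)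
  exact ⟨(isClopen_Ablock α (π g i)).diff image_clopen, (isClopen_Ablock α i).diff preimage_clopen,
    boundedIn_Ablock_diff image_clopen.isOpen pt_mem_image,
    boundedIn_Ablock_diff preimage_clopen.isOpen pt_mem_preimage⟩

/-- For every `g ∈ G` and `i ≥ 1`, the sets `P_i(g) = A_{π(g)(i)} \ g(A_i)`
and `Q_i(g) = A_i \ g⁻¹(A_{π(g)(i)})` are clopen in `X`, `P_i(g)` is a bounded subset of
`A_{π(g)(i)}`, and `Q_i(g)` is a bounded subset of `A_i`. -/
theorem Pset_Qset_clopen_bounded (α : Ordinal) (hα : α.card ≤ Cardinal.aleph0)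
    (π : (Xsp α ≃ₜ Xsp α) → Equiv.Perm ℕ+) (hπ : IsBlockPerm α π)
    (g : Xsp α ≃ₜ Xsp α) (i : ℕ+) :
    IsClopen (Pset α π g i) ∧ IsClopen (Qset α π g i) ∧
    BoundedIn α (π g i) (Pset α π g i) ∧ BoundedIn α i (Qset α π g i) :=
  Pset_Qset_clopen_bounded_general α π hπ g i
end
end
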